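/- arXiv:0911.5527 — 9 statements merged into one kernel-verified Lean document; each statement's English description precedes it below -/
import Mathlib

section
/- Let L ≥ 0 be an integer, a_0,…,a_L nonnegative reals with ∑_{l=0}^L a_l = 1 and a_0 > 0, and 0 < σ_0 ≤ σ_1 ≤ … ≤ σ_L positive reals. Let p : ℝ → ℝ be the one-dimensional mixed Gaussian density p(z) = ∑_{l=0}^L (a_l / (√(2π) σ_l)) · exp(−z²/(2σ_l²)). Then the differential entropy of p satisfies −∫_ℝ p(z) log p(z) dz ≤ ((1 − a_0)/2) · log(σ_L²/σ_0²) + log(√(2πe) · σ_0) + H, where H = −∑_{l=0}^L a_l log a_l (with the convention 0·log 0 = 0). -/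
open MeasureTheory Real

/-!
If `p = ∑ i, a i * f i` is a mixture of densities, monotonicity of `log` gives pointwise
`-p log p ≤ ∑ i, -(a i * f i) log (a i * f i)`, so the entropy of the mixture exceeds the mean
entropy of its components by at most the entropy of the weights. Jensen's inequality for the
concave function `negMulLog` gives the lower bound `∑ i, a i * negMulLog (f i) ≤ negMulLog p`,
and the two bounds together make `p log p` integrable. A Gaussian of variance `σ²` has entropy
`log (√(2πe) σ)`, which is `log (√(2πe) σ₀)` plus half of `log (σ² / σ₀²)`; the latter vanishes for
the distinguished component, and is bounded by its largest value for the others.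
-/

/-- The differential entropy `-∫ f log f ∂μ` of a density `f` with respect to the reference measure
`μ`. It is `0` by convention if the integrand is not integrable. -/
noncomputable def differentialEntropy {α : Type*} [MeasurableSpace α] (μ : Measure α)
    (f : α → ℝ) : ℝ :=
  ∫ x, negMulLog (f x) ∂μ

section FiniteSums

variable {ι : Type*} {s : Finset ι}

lemma negMulLog_sum_le_sum_negMulLog {x : ι → ℝ} (hx : ∀ i ∈ s, 0 ≤ x i) :
    negMulLog (∑ i ∈ s, x i) ≤ ∑ i ∈ s, negMulLog (x i) := by
  rw [negMulLog, ← Finset.sum_neg_distrib, Finset.sum_mul]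
  refine Finset.sum_le_sum fun i hi ↦ ?_
  rcases (hx i hi).eq_or_lt with hzero | hpos
  · simp [← hzero]
  · have hlog : log (x i) ≤ log (∑ j ∈ s, x j) := log_le_log hpos (Finset.single_le_sum hx hi)
    exact mul_le_mul_of_nonpos_left hlog (neg_nonpos.2 hpos.le)

lemma sum_mul_le_add_one_sub_mul {a x : ι → ℝ} {M : ℝ} {i₀ : ι} (ha : ∀ i ∈ s, 0 ≤ a i)
    (hasum : ∑ i ∈ s, a i = 1) (hi₀ : i₀ ∈ s) (hx : ∀ i ∈ s, i ≠ i₀ → x i ≤ M) :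
    ∑ i ∈ s, a i * x i ≤ a i₀ * x i₀ + (1 - a i₀) * M := by
  classical
  rw [← hasum, ← Finset.add_sum_erase s _ hi₀, ← Finset.sum_erase_eq_sub hi₀, Finset.sum_mul]
  gcongr with i hi
  · exact ha i (Finset.mem_of_mem_erase hi)
  · exact hx i (Finset.mem_of_mem_erase hi) (Finset.ne_of_mem_erase hi)

end FiniteSums

section Mixture

variable {α ι : Type*} [MeasurableSpace α] {μ : Measure α} {s : Finset ι} {a : ι → ℝ}
  {f : ι → α → ℝ}

lemma integrable_negMulLog_const_mul {g : α → ℝ} (hg : Integrable g μ)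
    (hent : Integrable (fun x ↦ negMulLog (g x)) μ) (c : ℝ) :
    Integrable (fun x ↦ negMulLog (c * g x)) μ := by
  simp_rw [negMulLog_mul]
  exact (hg.mul_const _).add (hent.const_mul _)

lemma differentialEntropy_const_mul {g : α → ℝ} (hg : Integrable g μ)
    (hent : Integrable (fun x ↦ negMulLog (g x)) μ) (c : ℝ) :
    differentialEntropy μ (fun x ↦ c * g x) =
      (∫ x, g x ∂μ) * negMulLog c + c * differentialEntropy μ g := by
  simp_rw [differentialEntropy, negMulLog_mul]
  rw [integral_add (hg.mul_const _) (hent.const_mul _), integral_mul_const, integral_const_mul]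

lemma negMulLog_mixture_ae_le (ha : ∀ i ∈ s, 0 ≤ a i) (hf : ∀ i ∈ s, 0 ≤ᵐ[μ] f i) :
    (fun x ↦ negMulLog (∑ i ∈ s, a i * f i x)) ≤ᵐ[μ]
      fun x ↦ ∑ i ∈ s, negMulLog (a i * f i x) := by
  filter_upwards [(Filter.eventually_all_finset s).2 hf] with x hfx
  exact negMulLog_sum_le_sum_negMulLog fun i hi ↦ mul_nonneg (ha i hi) (hfx i hi)

lemma sum_mul_negMulLog_ae_le_negMulLog_mixture (ha : ∀ i ∈ s, 0 ≤ a i)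
    (hasum : ∑ i ∈ s, a i = 1) (hf : ∀ i ∈ s, 0 ≤ᵐ[μ] f i) :
    (fun x ↦ ∑ i ∈ s, a i * negMulLog (f i x)) ≤ᵐ[μ]
      fun x ↦ negMulLog (∑ i ∈ s, a i * f i x) := by
  filter_upwards [(Filter.eventually_all_finset s).2 hf] with x hfx
  exact concaveOn_negMulLog.le_map_sum ha hasum hfx

lemma integrable_negMulLog_mixture (ha : ∀ i ∈ s, 0 ≤ a i) (hasum : ∑ i ∈ s, a i = 1)
    (hf : ∀ i ∈ s, 0 ≤ᵐ[μ] f i) (hfint : ∀ i ∈ s, Integrable (f i) μ)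
    (hent : ∀ i ∈ s, Integrable (fun x ↦ negMulLog (f i x)) μ) :
    Integrable (fun x ↦ negMulLog (∑ i ∈ s, a i * f i x)) μ :=
  have hmix : Integrable (fun x ↦ ∑ i ∈ s, a i * f i x) μ :=
    integrable_finsetSum s fun i hi ↦ (hfint i hi).const_mul (a i)
  integrable_of_le_of_le (continuous_negMulLog.comp_aestronglyMeasurable hmix.aestronglyMeasurable)
    (sum_mul_negMulLog_ae_le_negMulLog_mixture ha hasum hf) (negMulLog_mixture_ae_le ha hf)
    (integrable_finsetSum s fun i hi ↦ (hent i hi).const_mul (a i))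
    (integrable_finsetSum s fun i hi ↦
      integrable_negMulLog_const_mul (hfint i hi) (hent i hi) (a i))

lemma differentialEntropy_mixture_le (ha : ∀ i ∈ s, 0 ≤ a i) (hasum : ∑ i ∈ s, a i = 1)
    (hf : ∀ i ∈ s, 0 ≤ᵐ[μ] f i) (hfint : ∀ i ∈ s, Integrable (f i) μ)
    (hfone : ∀ i ∈ s, ∫ x, f i x ∂μ = 1)
    (hent : ∀ i ∈ s, Integrable (fun x ↦ negMulLog (f i x)) μ) :
    differentialEntropy μ (fun x ↦ ∑ i ∈ s, a i * f i x) ≤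
      ∑ i ∈ s, negMulLog (a i) + ∑ i ∈ s, a i * differentialEntropy μ (f i) := by
  have hterm : ∀ i ∈ s, Integrable (fun x ↦ negMulLog (a i * f i x)) μ := fun i hi ↦
    integrable_negMulLog_const_mul (hfint i hi) (hent i hi) (a i)
  calc differentialEntropy μ (fun x ↦ ∑ i ∈ s, a i * f i x)
      ≤ ∫ x, ∑ i ∈ s, negMulLog (a i * f i x) ∂μ :=
        integral_mono_ae (integrable_negMulLog_mixture ha hasum hf hfint hent)
          (integrable_finsetSum s hterm) (negMulLog_mixture_ae_le ha hf)
    _ = ∑ i ∈ s, differentialEntropy μ (fun x ↦ a i * f i x) := integral_finsetSum s hterm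
    _ = ∑ i ∈ s, (negMulLog (a i) + a i * differentialEntropy μ (f i)) :=
        Finset.sum_congr rfl fun i hi ↦ by
          rw [differentialEntropy_const_mul (hfint i hi) (hent i hi), hfone i hi, one_mul]
    _ = _ := Finset.sum_add_distrib

end Mixture

section Gaussian

open ProbabilityTheory
open scoped NNReal

lemma gaussianPDFReal_toNNReal_sq (m : ℝ) {σ : ℝ} (hσ : 0 ≤ σ) (x : ℝ) :
    gaussianPDFReal m (σ ^ 2).toNNReal x =
      (√(2 * π) * σ)⁻¹ * exp (-(x - m) ^ 2 / (2 * σ ^ 2)) := by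
  rw [gaussianPDFReal, coe_toNNReal _ (sq_nonneg σ), sqrt_mul (by positivity), sqrt_sq hσ]

lemma integrable_gaussianReal_iff {E : Type*} [NormedAddCommGroup E] [NormedSpace ℝ E] (m : ℝ)
    {v : ℝ≥0} (hv : v ≠ 0) {g : ℝ → E} :
    Integrable g (gaussianReal m v) ↔ Integrable fun x ↦ gaussianPDFReal m v x • g x := by
  rw [gaussianReal_of_var_ne_zero m hv, integrable_withDensity_iff_integrable_smul'
    (measurable_gaussianPDF m v) (.of_forall fun _ ↦ gaussianPDF_lt_top)]
  simp_rw [toReal_gaussianPDF]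

lemma neg_log_gaussianPDFReal (m : ℝ) {v : ℝ≥0} (hv : v ≠ 0) (x : ℝ) :
    -log (gaussianPDFReal m v x) = log (2 * π * v) / 2 + (x - m) ^ 2 / (2 * v) := by
  rw [gaussianPDFReal, log_mul (by positivity) (exp_ne_zero _), log_inv, log_exp,
    log_sqrt (by positivity)]
  ring

lemma integrable_sq_sub_gaussianReal (m : ℝ) (v : ℝ≥0) :
    Integrable (fun x ↦ (x - m) ^ 2) (gaussianReal m v) :=
  ((memLp_id_gaussianReal 2).sub (memLp_const m)).integrable_sq

lemma integral_sq_sub_gaussianReal (m : ℝ) (v : ℝ≥0) :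
    ∫ x, (x - m) ^ 2 ∂gaussianReal m v = v := by
  simpa [variance_eq_integral aemeasurable_id] using variance_id_gaussianReal (μ := m) (v := v)

lemma integrable_negMulLog_gaussianPDFReal (m : ℝ) {v : ℝ≥0} (hv : v ≠ 0) :
    Integrable fun x ↦ negMulLog (gaussianPDFReal m v x) := by
  have hlog : Integrable (fun x ↦ -log (gaussianPDFReal m v x)) (gaussianReal m v) := by
    simp_rw [neg_log_gaussianPDFReal m hv]
    exact (integrable_const _).add ((integrable_sq_sub_gaussianReal m v).div_const _)
  simpa [integrable_gaussianReal_iff m hv, negMulLog] using hlog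

lemma differentialEntropy_gaussianPDFReal (m : ℝ) {v : ℝ≥0} (hv : v ≠ 0) :
    differentialEntropy volume (gaussianPDFReal m v) = log (√(2 * π * exp 1 * v)) := by
  calc differentialEntropy volume (gaussianPDFReal m v)
      = ∫ x, -log (gaussianPDFReal m v x) ∂gaussianReal m v := by
        simp [differentialEntropy, negMulLog, integral_gaussianReal_eq_integral_smul hv]
    _ = log (2 * π * v) / 2 + v / (2 * v) := by
        simp_rw [neg_log_gaussianPDFReal m hv]
        rw [integral_add (integrable_const _) ((integrable_sq_sub_gaussianReal m v).div_const _),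
          integral_div (2 * (v : ℝ)), integral_sq_sub_gaussianReal, integral_const, probReal_univ,
          one_smul]
    _ = log (√(2 * π * exp 1 * v)) := by
        rw [log_sqrt (by positivity), mul_right_comm _ (exp 1),
          log_mul (by positivity) (exp_ne_zero 1), log_exp]
        field_simp

lemma differentialEntropy_gaussianMixture_le {ι : Type*} {s : Finset ι} {a : ι → ℝ}
    (ha : ∀ i ∈ s, 0 ≤ a i) (hasum : ∑ i ∈ s, a i = 1) (m : ι → ℝ) {v : ι → ℝ≥0}
    (hv : ∀ i ∈ s, v i ≠ 0) :
    differentialEntropy volume (fun x ↦ ∑ i ∈ s, a i * gaussianPDFReal (m i) (v i) x) ≤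
      ∑ i ∈ s, negMulLog (a i) + ∑ i ∈ s, a i * log (√(2 * π * exp 1 * v i)) := by
  refine (differentialEntropy_mixture_le ha hasum
    (fun i _ ↦ .of_forall (gaussianPDFReal_nonneg (m i) (v i)))
    (fun i _ ↦ integrable_gaussianPDFReal (m i) (v i))
    (fun i hi ↦ integral_gaussianPDFReal_eq_one (m i) (hv i hi))
    (fun i hi ↦ integrable_negMulLog_gaussianPDFReal (m i) (hv i hi))).trans_eq ?_
  congr 1
  exact Finset.sum_congr rfl fun i hi ↦ by
    rw [differentialEntropy_gaussianPDFReal (m i) (hv i hi)]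

end Gaussian

lemma log_sqrt_mul_sq_eq_log_add_log_div {c ρ σ : ℝ} (hc : 0 < c) (hρ : 0 < ρ) (hσ : σ ≠ 0) :
    log (√(c * σ ^ 2)) = log (√c * ρ) + log (σ ^ 2 / ρ ^ 2) / 2 := by
  rw [log_sqrt (by positivity), log_mul (by positivity) (by positivity),
    log_mul (by positivity) (by positivity), log_sqrt hc.le,
    log_div (by positivity) (by positivity), log_pow ρ]
  push_cast
  ring

lemma sum_mul_log_sqrt_mul_sq_le {ι : Type*} {s : Finset ι} {a σ : ι → ℝ} {c τ : ℝ} {i₀ : ι}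
    (hc : 0 < c) (ha : ∀ i ∈ s, 0 ≤ a i) (hasum : ∑ i ∈ s, a i = 1) (hσ : ∀ i ∈ s, 0 < σ i)
    (hi₀ : i₀ ∈ s) (hτ : ∀ i ∈ s, i ≠ i₀ → σ i ≤ τ) :
    ∑ i ∈ s, a i * log (√(c * σ i ^ 2)) ≤
      (1 - a i₀) / 2 * log (τ ^ 2 / σ i₀ ^ 2) + log (√c * σ i₀) := by
  have hσ₀ : 0 < σ i₀ := hσ i₀ hi₀
  have hratio : ∑ i ∈ s, a i * log (σ i ^ 2 / σ i₀ ^ 2) ≤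
      (1 - a i₀) * log (τ ^ 2 / σ i₀ ^ 2) := by
    have hle : ∀ i ∈ s, i ≠ i₀ → log (σ i ^ 2 / σ i₀ ^ 2) ≤ log (τ ^ 2 / σ i₀ ^ 2) := by
      intro i hi hne
      have hσi : 0 < σ i := hσ i hi
      gcongr
      exact hτ i hi hne
    simpa [hσ₀.ne'] using sum_mul_le_add_one_sub_mul ha hasum hi₀ hle
  calc ∑ i ∈ s, a i * log (√(c * σ i ^ 2))
      = ∑ i ∈ s, (a i * log (√c * σ i₀) + a i * log (σ i ^ 2 / σ i₀ ^ 2) / 2) :=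
        Finset.sum_congr rfl fun i hi ↦ by
          rw [log_sqrt_mul_sq_eq_log_add_log_div hc hσ₀ (hσ i hi).ne', mul_add, mul_div_assoc]
    _ = log (√c * σ i₀) + (∑ i ∈ s, a i * log (σ i ^ 2 / σ i₀ ^ 2)) / 2 := by
        rw [Finset.sum_add_distrib, ← Finset.sum_mul, ← Finset.sum_div, hasum, one_mul]
    _ ≤ _ := by linarith

theorem mixedGaussian_entropy_upper_bound_general {ι : Type*} [Fintype ι] {a : ι → ℝ}
    (ha : ∀ l, 0 ≤ a l) (hasum : ∑ l, a l = 1) (m : ι → ℝ) {σ : ι → ℝ} (hσ : ∀ l, 0 < σ l)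
    {l₀ : ι} {τ : ℝ} (hτ : ∀ l ≠ l₀, σ l ≤ τ) :
    -∫ z : ℝ, (∑ l, a l / (√(2 * π) * σ l) * exp (-(z - m l) ^ 2 / (2 * σ l ^ 2))) *
        log (∑ l, a l / (√(2 * π) * σ l) * exp (-(z - m l) ^ 2 / (2 * σ l ^ 2)))
      ≤ (1 - a l₀) / 2 * log (τ ^ 2 / σ l₀ ^ 2) + log (√(2 * π * exp 1) * σ l₀)
        + (-∑ l, a l * log (a l)) := by
  have hvar (l) : (σ l ^ 2).toNNReal ≠ 0 := (toNNReal_pos.2 (pow_pos (hσ l) 2)).ne'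
  have hmixture := differentialEntropy_gaussianMixture_le (fun l _ ↦ ha l) hasum m
    fun l _ ↦ hvar l
  have hmean := sum_mul_log_sqrt_mul_sq_le (c := 2 * π * exp 1) (by positivity)
    (fun l _ ↦ ha l) hasum (fun l _ ↦ hσ l) (Finset.mem_univ l₀) fun l _ ↦ hτ l
  simp_rw [differentialEntropy, gaussianPDFReal_toNNReal_sq _ (hσ _).le, ← mul_assoc,
    ← div_eq_mul_inv, coe_toNNReal _ (sq_nonneg _), negMulLog, neg_mul, integral_neg,
    Finset.sum_neg_distrib] at hmixture
  linarith

/-- **Lemma 2.**  The differential entropy of a one-dimensional mixed Gaussian density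
`p z = ∑ l, a l / (√(2π) σ l) * exp (-z²/(2 σ l²))` with weights `a l` (summing to one, with
`a 0 > 0`) and standard deviations `0 < σ 0 ≤ σ 1 ≤ … ≤ σ L` is bounded above by
`(1 - a 0)/2 * log (σ L² / σ 0²) + log (√(2πe) σ 0) + H`, where `H` is the discrete entropy
of the weights. -/
theorem mixedGaussian_entropy_upper_bound
    (L : ℕ) (a : Fin (L + 1) → ℝ) (ha : ∀ l, 0 ≤ a l) (hasum : ∑ l, a l = 1)
    (ha0 : 0 < a 0)
    (σ : Fin (L + 1) → ℝ) (hσ0 : 0 < σ 0) (hσmono : Monotone σ) :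
    -∫ z : ℝ, (∑ l, a l / (Real.sqrt (2 * π) * σ l) * Real.exp (-z ^ 2 / (2 * σ l ^ 2))) *
        Real.log (∑ l, a l / (Real.sqrt (2 * π) * σ l) * Real.exp (-z ^ 2 / (2 * σ l ^ 2)))
      ≤ (1 - a 0) / 2 * Real.log (σ (Fin.last L) ^ 2 / σ 0 ^ 2)
        + Real.log (Real.sqrt (2 * π * Real.exp 1) * σ 0)
        + (-∑ l, a l * Real.log (a l)) := by
  simpa only [sub_zero] using mixedGaussian_entropy_upper_bound_general ha hasum (fun _ ↦ 0)
    (fun l ↦ hσ0.trans_le (hσmono (Fin.zero_le l))) fun l (_ : l ≠ 0) ↦ hσmono (Fin.le_last l)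
end

section
/- Let u > 0 be a real number and N ≥ 1 an integer. Define SMG(v, N) = (N/2) · v · (1 − v/u)^{N−1} for v ∈ [0, u]. Then sup_{v ∈ [0,u]} SMG(v, N) = (u/2) · (1 − 1/N)^{N−1}, and the supremum is attained at v = u/N. -/
/-! With `t = v / u`, the sum multiplexing gain is `u / 2` times `N * t * (1 - t) ^ (N - 1)`.
The `N` numbers `(N - 1) * t, 1 - t, …, 1 - t` have the constant sum `N - 1`, so by AM-GM their
product is largest when they are equal, that is, at `t = 1 / N`. -/

section Field

variable {K : Type*} [Field K]

/-- The sum multiplexing gain `SMG(v, N)` of `N` users, each hopping over `v` of `u` sub-bands.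
The parameters `u` and `v` range over a field rather than over the natural numbers, so that the
optimum `v = u / N` is always available. -/
def smg (u : K) (N : ℕ) (v : K) : K :=
  N / 2 * v * (1 - v / u) ^ (N - 1)

theorem smg_eq_half_mul {u : K} (hu : u ≠ 0) (N : ℕ) (v : K) :
    smg u N v = u / 2 * (N * (v / u) * (1 - v / u) ^ (N - 1)) := by
  have hv : u * (v / u) = v := mul_div_cancel₀ v hu
  rw [smg]
  linear_combination -(N / 2 * (1 - v / u) ^ (N - 1)) * hv

theorem smg_div_natCast {u : K} {N : ℕ} (hu : u ≠ 0) (hN : (N : K) ≠ 0) :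
    smg u N (u / N) = u / 2 * (1 - 1 / (N : K)) ^ (N - 1) := by
  have hratio : u / N / u = 1 / (N : K) := by field_simp
  rw [smg_eq_half_mul hu, hratio, mul_one_div_cancel hN, one_mul]

end Field

section LinearOrderedField

variable {K : Type*} [Field K] [LinearOrder K] [IsStrictOrderedRing K]

theorem mul_pow_le_arith_mean_pow {x y : K} {n : ℕ} (hy : 0 ≤ y) (hxy : 0 ≤ x + n * y) :
    x * y ^ n ≤ ((x + n * y) / (n + 1)) ^ (n + 1) := by
  -- Bernoulli's inequality: `z ^ (n + 1)` lies above its tangent at `y`, evaluated at the mean.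
  set m := (x + n * y) / (n + 1) with hm
  have hm₀ : 0 ≤ m := by positivity
  have hmean : (n + 1) * (m - y) = x - y := by
    rw [hm]
    field_simp
    ring
  calc
    x * y ^ n = y ^ (n + 1) + (n + 1 : ℕ) * y ^ n * (m - y) := by
      push_cast
      linear_combination -y ^ n * hmean
    _ ≤ (y + (m - y)) ^ (n + 1) := pow_add_mul_le_add_pow hy (by linarith) (n + 1)
    _ = m ^ (n + 1) := by rw [add_sub_cancel]

theorem natCast_mul_mul_one_sub_pow_le {t : K} {N : ℕ} (ht : t ≤ 1) (hN : 1 ≤ N) :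
    N * t * (1 - t) ^ (N - 1) ≤ (1 - 1 / (N : K)) ^ (N - 1) := by
  obtain ⟨n, rfl⟩ := Nat.exists_eq_add_of_le' hN
  rw [Nat.add_sub_cancel, Nat.cast_add_one]
  rcases n.eq_zero_or_pos with rfl | hn
  · simpa using ht
  have hsum : n * t + n * (1 - t) = (n : K) := by ring
  have hmean : 1 - 1 / ((n : K) + 1) = n / (n + 1) := by
    field_simp
    ring
  have hamgm := mul_pow_le_arith_mean_pow (sub_nonneg.2 ht) (n.cast_nonneg.trans_eq hsum.symm)
  rw [hsum] at hamgm
  rw [hmean]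
  refine le_of_mul_le_mul_left ?_ (by positivity : (0 : K) < n / (n + 1))
  calc
    (n : K) / (n + 1) * ((n + 1) * t * (1 - t) ^ n) = n * t * (1 - t) ^ n := by field_simp
    _ ≤ (n / (n + 1)) ^ (n + 1) := hamgm
    _ = n / (n + 1) * (n / (n + 1)) ^ n := pow_succ' _ _

theorem smg_le {u v : K} {N : ℕ} (hu : 0 < u) (hN : 1 ≤ N) (hv : v ≤ u) :
    smg u N v ≤ u / 2 * (1 - 1 / (N : K)) ^ (N - 1) := by
  rw [smg_eq_half_mul hu.ne']
  exact mul_le_mul_of_nonneg_left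
    (natCast_mul_mul_one_sub_pow_le ((div_le_one hu).2 hv) hN) (half_pos hu).le

theorem smg_sup_general {u : K} {N : ℕ} (hu : 0 < u) (hN : 1 ≤ N) :
    IsGreatest (smg u N '' Set.Icc 0 u) (u / 2 * (1 - 1 / (N : K)) ^ (N - 1)) ∧
      smg u N (u / N) = u / 2 * (1 - 1 / (N : K)) ^ (N - 1) ∧ u / (N : K) ∈ Set.Icc 0 u := by
  have hmem : u / (N : K) ∈ Set.Icc 0 u :=
    ⟨by positivity, div_le_self hu.le (Nat.one_le_cast.2 hN)⟩
  have hN₀ : (N : K) ≠ 0 := Nat.cast_ne_zero.2 (Nat.one_le_iff_ne_zero.1 hN)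
  have hval := smg_div_natCast hu.ne' hN₀
  refine ⟨⟨⟨u / N, hmem, hval⟩, ?_⟩, hval, hmem⟩
  rintro _ ⟨v, hv, rfl⟩
  exact smg_le hu hN hv.2

end LinearOrderedField

/-- **Optimal fair hopping parameter (eqs. (37)–(39)).**  For `SMG(v,N) = (N/2) v (1 - v/u)^(N-1)`
on `v ∈ [0,u]`, the supremum equals `(u/2) (1 - 1/N)^(N-1)` and is attained at `v = u/N`. -/
theorem smg_sup (u : ℝ) (hu : 0 < u) (N : ℕ) (hN : 1 ≤ N) :
    IsGreatest ((fun v : ℝ => ((N : ℝ) / 2) * v * (1 - v / u) ^ (N - 1)) '' Set.Icc 0 u)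
      ((u / 2) * (1 - 1 / (N : ℝ)) ^ (N - 1)) ∧
    ((N : ℝ) / 2) * (u / N) * (1 - (u / N) / u) ^ (N - 1)
      = (u / 2) * (1 - 1 / (N : ℝ)) ^ (N - 1) ∧ u / (N : ℝ) ∈ Set.Icc 0 u :=
  smg_sup_general hu hN
end

section
/- Let u > 0 be a real number and N ≥ 2 an integer. For all (v_1,…,v_N) ∈ (0,u)^N, the function Φ(v_1,…,v_N) = ∑_{i=1}^N log( v_i · ∏_{k≠i} (1 − v_k/u) ) satisfies Φ(v_1,…,v_N) ≤ Φ(u/N,…,u/N) = N · log( (u/N) · (1 − 1/N)^{N−1} ); i.e., Φ has an absolute maximum at v_i = u/N for all i. -/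
/-!
Each factor `1 - v k / u` occurs in every summand of the utility but the `k`-th, so `Φ` separates as
`∑ i, (log (v i) + (N - 1) * log (1 - v i / u))`. Up to an additive constant, a single summand
is `-N` times the cross entropy of `(v i / u, 1 - v i / u)` relative to `(1 / N, 1 - 1 / N)`, so by
Gibbs' inequality it is largest when these two distributions agree, that is at `v i = u / N`.
-/

open Finset

lemma sum_log_mul_prod_erase {ι : Type*} [DecidableEq ι] {s : Finset ι} {a b : ι → ℝ}
    (ha : ∀ i ∈ s, a i ≠ 0) (hb : ∀ i ∈ s, b i ≠ 0) :
    ∑ i ∈ s, Real.log (a i * ∏ k ∈ s.erase i, b k) =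
      ∑ i ∈ s, (Real.log (a i) + ((#s : ℝ) - 1) * Real.log (b i)) := by
  have log_term (i : ι) (hi : i ∈ s) : Real.log (a i * ∏ k ∈ s.erase i, b k) =
      Real.log (a i) + (∑ k ∈ s, Real.log (b k) - Real.log (b i)) := by
    have hb' : ∀ k ∈ s.erase i, b k ≠ 0 := fun k hk ↦ hb k (mem_of_mem_erase hk)
    rw [Real.log_mul (ha i hi) (prod_ne_zero_iff.2 hb'), Real.log_prod hb',
      sum_erase_eq_sub hi]
  rw [sum_congr rfl log_term]
  simp only [sum_add_distrib, sum_sub_distrib, sum_const, nsmul_eq_mul, ← mul_sum]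
  ring

lemma mul_log_le_mul_log_add_sub {p q : ℝ} (hp : 0 ≤ p) (hq : 0 < q) :
    p * Real.log q ≤ p * Real.log p + (q - p) := by
  obtain rfl | hp := hp.eq_or_lt
  · simpa using hq.le
  calc p * Real.log q = p * Real.log p + p * Real.log (q / p) := by
        rw [Real.log_div hq.ne' hp.ne']; ring
    _ ≤ p * Real.log p + p * (q / p - 1) := by
        gcongr
        exact Real.log_le_sub_one_of_pos (div_pos hq hp)
    _ = p * Real.log p + (q - p) := by field_simp

lemma isMaxOn_log_add_mul_log_one_sub_div {u n : ℝ} (hn : 1 ≤ n) :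
    IsMaxOn (fun x ↦ Real.log x + (n - 1) * Real.log (1 - x / u)) (Set.Ioo 0 u) (u / n) := by
  rintro x ⟨hx0, hxu⟩
  have hu : 0 < u := hx0.trans hxu
  have hn0 : 0 < n := by linarith
  have hcomp : 1 - u / n / u = (n - 1) / n := by field_simp
  have gibbs_fst := mul_log_le_mul_log_add_sub (p := u / n) (by positivity) hx0
  have gibbs_snd := mul_log_le_mul_log_add_sub (p := 1 - u / n / u) (q := 1 - x / u)
    (hcomp ▸ div_nonneg (sub_nonneg.2 hn) hn0.le) (sub_pos.2 ((div_lt_one hu).2 hxu))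
  -- The linear error terms of the two bounds cancel because both distributions have mass `1`.
  have hcancel : (x - u / n) + u * ((1 - x / u) - (1 - u / n / u)) = 0 := by
    field_simp
    ring
  have hweight (t : ℝ) : u * ((1 - u / n / u) * t) = u / n * ((n - 1) * t) := by
    rw [hcomp]; ring
  have gibbs_snd_scaled := mul_le_mul_of_nonneg_left gibbs_snd hu.le
  rw [mul_add, hweight, hweight] at gibbs_snd_scaled
  refine le_of_mul_le_mul_left ?_ (div_pos hu hn0)
  linarith

section Utility

variable {ι : Type*} [Fintype ι] [DecidableEq ι] {u : ℝ}

/-- The function `Φ` of the paper: the part of the proportional fair utility that depends on the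
hopping parameters `v i` of the users `i : ι`, who share `u` sub-bands. The factor `1 / 2` of the
multiplexing gains only shifts it by a constant and is left out. -/
noncomputable def proportionalFairUtility (u : ℝ) (v : ι → ℝ) : ℝ :=
  ∑ i, Real.log (v i * ∏ k ∈ univ.erase i, (1 - v k / u))

lemma proportionalFairUtility_const (c : ℝ) :
    proportionalFairUtility u (fun _ : ι ↦ c) =
      Fintype.card ι * Real.log (c * (1 - c / u) ^ (Fintype.card ι - 1)) := by
  simp [proportionalFairUtility]

lemma proportionalFairUtility_eq_sum {v : ι → ℝ} (hv : ∀ i, v i ∈ Set.Ioo 0 u) :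
    proportionalFairUtility u v =
      ∑ i, (Real.log (v i) + ((Fintype.card ι : ℝ) - 1) * Real.log (1 - v i / u)) := by
  refine sum_log_mul_prod_erase (fun i _ ↦ (hv i).1.ne') fun i _ ↦ ?_
  have hu : 0 < u := (hv i).1.trans (hv i).2
  exact (sub_pos.2 ((div_lt_one hu).2 (hv i).2)).ne'

theorem isMaxOn_proportionalFairUtility [Nontrivial ι] :
    IsMaxOn (proportionalFairUtility u) {v : ι → ℝ | ∀ i, v i ∈ Set.Ioo 0 u}
      (fun _ ↦ u / Fintype.card ι) := by
  intro v hv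
  have hcard : (1 : ℝ) < Fintype.card ι := by exact_mod_cast Fintype.one_lt_card
  obtain ⟨i₀⟩ : Nonempty ι := inferInstance
  have hu : 0 < u := (hv i₀).1.trans (hv i₀).2
  have hmem : u / Fintype.card ι ∈ Set.Ioo 0 u := ⟨by positivity, div_lt_self hu hcard⟩
  calc proportionalFairUtility u v
      = ∑ i, (Real.log (v i) + ((Fintype.card ι : ℝ) - 1) * Real.log (1 - v i / u)) :=
        proportionalFairUtility_eq_sum hv
    _ ≤ ∑ _ : ι, (Real.log (u / Fintype.card ι) +
          ((Fintype.card ι : ℝ) - 1) * Real.log (1 - u / Fintype.card ι / u)) :=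
        sum_le_sum fun i _ ↦ isMaxOn_log_add_mul_log_one_sub_div hcard.le (hv i)
    _ = proportionalFairUtility u (fun _ : ι ↦ u / Fintype.card ι) :=
        (proportionalFairUtility_eq_sum fun _ ↦ hmem).symm

end Utility

/-- **Observation 1.**  The proportional-fair utility
`Φ(v) = ∑ i, log (v i * ∏_{k ≠ i} (1 - v k / u))` on `(0,u)^N` has an absolute maximum at
`v i = u / N` for all `i`, where it takes the value `N * log ((u/N) * (1 - 1/N)^(N-1))`. -/
theorem proportional_fair_max (u : ℝ) (hu : 0 < u) (N : ℕ) (hN : 2 ≤ N) :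
    (∀ v : Fin N → ℝ, (∀ i, v i ∈ Set.Ioo 0 u) →
      ∑ i, Real.log (v i * ∏ k ∈ Finset.univ.erase i, (1 - v k / u)) ≤
        ∑ i : Fin N, Real.log ((u / N) * ∏ k ∈ Finset.univ.erase i, (1 - (u / N) / u))) ∧
    ∑ i : Fin N, Real.log ((u / N) * ∏ k ∈ Finset.univ.erase i, (1 - (u / N) / u))
      = N * Real.log ((u / N) * (1 - 1 / (N : ℝ)) ^ (N - 1)) := by
  have : Nontrivial (Fin N) := Fin.nontrivial_iff_two_le.2 hN
  have hcomp : 1 - u / N / u = 1 - 1 / (N : ℝ) := by rw [div_div_cancel_left' hu.ne', one_div]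
  have hmax := isMaxOn_proportionalFairUtility (ι := Fin N) (u := u)
  have hvalue := proportionalFairUtility_const (ι := Fin N) (u := u) (u / N)
  rw [Fintype.card_fin] at hmax
  rw [Fintype.card_fin, hcomp] at hvalue
  exact ⟨fun _ hv ↦ hmax hv, hvalue⟩
end

section
/- Let (Ω, F, P) be a probability space, n_max ≥ 2 an integer, u > 0 a real, and N : Ω → ℕ a random variable with P(1 ≤ N ≤ n_max) = 1. Define η_FD = E[N] · u / (2 n_max) and η_FH = (1/2) · sup_{v ∈ [0,u]} ( v · E[ N · (1 − v/u)^{N−1} ] ). If E[N] < (1/2) · ln( (e² − 1) · n_max ), then η_FD < η_FH. -/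
open MeasureTheory

/-!
Take the hopping parameter `v = (1 - e⁻ᵃ) u` with `a ≥ 2`. Its mean gain is proportional to
`E[N e^(-aN)]`, and `t ↦ t e^(-at)` is convex for `t ≥ 2 / a`, a range containing all possible
values of `N`. Jensen's inequality therefore bounds the gain below by a function of `E[N]` alone,
and the threshold on `E[N]` is exactly the condition for this bound to exceed the gain of
frequency division. The theorem is the case `a = 2`.
-/

theorem convexOn_mul_exp_neg_mul {a : ℝ} (ha : a ≠ 0) :
    ConvexOn ℝ (Set.Ici (2 / a)) fun t : ℝ => t * Real.exp (-a * t) := by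
  have hexp (t : ℝ) : HasDerivAt (fun t : ℝ => Real.exp (-a * t)) (Real.exp (-a * t) * -a) t := by
    simpa using ((hasDerivAt_id t).const_mul (-a)).exp
  have hlin (t : ℝ) : HasDerivAt (fun t : ℝ => 1 - a * t) (-a) t := by
    simpa using ((hasDerivAt_id t).const_mul a).const_sub 1
  refine convexOn_of_hasDerivWithinAt2_nonneg (convex_Ici _) (by fun_prop)
    (f' := fun t => (1 - a * t) * Real.exp (-a * t))
    (f'' := fun t => a ^ 2 * (t - 2 / a) * Real.exp (-a * t)) ?_ ?_ ?_
  · intro t _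
    refine (((hasDerivAt_id t).mul (hexp t)).congr_deriv ?_).hasDerivWithinAt
    simp only [id]
    ring
  · intro t _
    refine (((hlin t).mul (hexp t)).congr_deriv ?_).hasDerivWithinAt
    field_simp
    ring
  · intro t ht
    rw [interior_Ici] at ht
    have : 0 ≤ t - 2 / a := sub_nonneg.2 (le_of_lt ht)
    positivity

theorem lt_one_div_mul_log_exp_sub_one_mul_iff {a c x : ℝ} (ha : 0 < a) (hc : 0 < c) :
    x < (1 / a) * Real.log ((Real.exp a - 1) * c) ↔
      1 / c < (Real.exp a - 1) * Real.exp (-a * x) := by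
  have hexp : 0 < Real.exp a - 1 := sub_pos.2 (Real.one_lt_exp_iff.2 ha)
  rw [one_div_mul_eq_div, lt_div_iff₀' ha, Real.lt_log_iff_exp_lt (by positivity), neg_mul,
    Real.exp_neg, ← div_eq_mul_inv, div_lt_div_iff₀ hc (Real.exp_pos _), one_mul]

section

variable {Ω : Type*} [MeasurableSpace Ω] {μ : Measure Ω}

theorem integrable_natCast_of_ae_le [IsFiniteMeasure μ] {N : Ω → ℕ} {n : ℕ}
    (hN : AEMeasurable N μ) (hle : ∀ᵐ ω ∂μ, N ω ≤ n) : Integrable (fun ω => (N ω : ℝ)) μ := by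
  refine .of_bound (measurable_from_top.comp_aemeasurable hN).aestronglyMeasurable n ?_
  filter_upwards [hle] with ω hω
  simpa using hω

theorem integral_mul_exp_neg_mul_integral_le [IsProbabilityMeasure μ] {a : ℝ} (ha : 0 < a)
    {X : Ω → ℝ} (hX : Integrable X μ) (hle : ∀ᵐ ω ∂μ, 2 / a ≤ X ω) :
    (∫ ω, X ω ∂μ) * Real.exp (-a * ∫ ω, X ω ∂μ) ≤ ∫ ω, X ω * Real.exp (-a * X ω) ∂μ := by
  have hmeas : AEStronglyMeasurable (fun ω => Real.exp (-a * X ω)) μ :=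
    Real.continuous_exp.comp_aestronglyMeasurable (hX.aestronglyMeasurable.const_mul (-a))
  have hexp : ∀ᵐ ω ∂μ, ‖Real.exp (-a * X ω)‖ ≤ 1 := by
    filter_upwards [hle] with ω hω
    have : 0 ≤ X ω := (by positivity : 0 ≤ 2 / a).trans hω
    rw [Real.norm_of_nonneg (Real.exp_pos _).le, Real.exp_le_one_iff, neg_mul, neg_nonpos]
    positivity
  exact (convexOn_mul_exp_neg_mul ha.ne').map_integral_le (by fun_prop) isClosed_Ici hle hX
    (hX.mul_bdd hmeas hexp)

/-- The mean gain `v · E[N (1 - v/u)^(N-1)]` of frequency hopping over `v` of `u` sub-bands with a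
random number `N` of active users. The paper's average sum multiplexing gain is half of it; the
factor `1/2` is kept outside the supremum over `v`. -/
noncomputable def hoppingGain (μ : Measure Ω) (u : ℝ) (N : Ω → ℕ) (v : ℝ) : ℝ :=
  v * ∫ ω, (N ω : ℝ) * (1 - v / u) ^ (N ω - 1) ∂μ

variable {u : ℝ} {N : Ω → ℕ}

theorem hoppingGain_le (hN : Integrable (fun ω => (N ω : ℝ)) μ) {v : ℝ} (hv : v ∈ Set.Icc 0 u) :
    hoppingGain μ u N v ≤ v * ∫ ω, (N ω : ℝ) ∂μ := by
  obtain ⟨hv0, hvu⟩ := hv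
  have hu : 0 ≤ u := hv0.trans hvu
  have hbase_nonneg : 0 ≤ 1 - v / u := sub_nonneg.2 (div_le_one_of_le₀ hvu hu)
  have hbase_le_one : 1 - v / u ≤ 1 := sub_le_self _ (by positivity)
  refine mul_le_mul_of_nonneg_left (integral_mono_of_nonneg ?_ hN ?_) hv0
  · exact ae_of_all _ fun ω => by positivity
  · exact ae_of_all _ fun ω =>
      mul_le_of_le_one_right (Nat.cast_nonneg _) (pow_le_one₀ hbase_nonneg hbase_le_one)

theorem bddAbove_hoppingGain_image (hN : Integrable (fun ω => (N ω : ℝ)) μ) :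
    BddAbove (hoppingGain μ u N '' Set.Icc 0 u) := by
  refine ⟨u * ∫ ω, (N ω : ℝ) ∂μ, ?_⟩
  rintro _ ⟨v, hv, rfl⟩
  exact (hoppingGain_le hN hv).trans
    (mul_le_mul_of_nonneg_right hv.2 (integral_nonneg fun _ => Nat.cast_nonneg _))

theorem hoppingGain_one_sub_exp_neg_mul (hu : u ≠ 0) (hN : ∀ᵐ ω ∂μ, 1 ≤ N ω) (a : ℝ) :
    hoppingGain μ u N ((1 - Real.exp (-a)) * u) =
      u * (Real.exp a - 1) * ∫ ω, (N ω : ℝ) * Real.exp (-a * N ω) ∂μ := by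
  have hpow {n : ℕ} (hn : 1 ≤ n) :
      Real.exp (-a) ^ (n - 1) = Real.exp a * Real.exp (-a * n) := by
    rw [← Real.exp_nat_mul, ← Real.exp_add, Nat.cast_sub hn, Nat.cast_one]
    ring_nf
  have hintegral : ∫ ω, (N ω : ℝ) * Real.exp (-a) ^ (N ω - 1) ∂μ =
      Real.exp a * ∫ ω, (N ω : ℝ) * Real.exp (-a * N ω) ∂μ := by
    rw [← integral_const_mul]
    refine integral_congr_ae (hN.mono fun ω hω => ?_)
    simp only [hpow hω, mul_left_comm]
  have hcoef : (1 - Real.exp (-a)) * Real.exp a = Real.exp a - 1 := by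
    rw [sub_mul, one_mul, ← Real.exp_add, neg_add_cancel, Real.exp_zero]
  rw [hoppingGain, mul_div_cancel_right₀ _ hu, sub_sub_cancel, hintegral, ← hcoef]
  ring

theorem le_sSup_hoppingGain [IsProbabilityMeasure μ] (hu : 0 < u)
    (hint : Integrable (fun ω => (N ω : ℝ)) μ) (hN : ∀ᵐ ω ∂μ, 1 ≤ N ω) {a : ℝ} (ha : 2 ≤ a) :
    u * (Real.exp a - 1) * ((∫ ω, (N ω : ℝ) ∂μ) * Real.exp (-a * ∫ ω, (N ω : ℝ) ∂μ)) ≤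
      sSup (hoppingGain μ u N '' Set.Icc 0 u) := by
  have ha0 : 0 < a := two_pos.trans_le ha
  have hexp : 0 ≤ Real.exp a - 1 := sub_nonneg.2 (Real.one_le_exp ha0.le)
  have hrange : ∀ᵐ ω ∂μ, 2 / a ≤ (N ω : ℝ) :=
    hN.mono fun ω hω => ((div_le_one ha0).2 ha).trans (Nat.one_le_cast.2 hω)
  have hmem : (1 - Real.exp (-a)) * u ∈ Set.Icc 0 u := by
    have : Real.exp (-a) ≤ 1 := Real.exp_le_one_iff.2 (neg_nonpos.2 ha0.le)
    exact ⟨mul_nonneg (sub_nonneg.2 this) hu.le,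
      mul_le_of_le_one_left hu.le (sub_le_self _ (Real.exp_pos _).le)⟩
  calc
    _ ≤ u * (Real.exp a - 1) * ∫ ω, (N ω : ℝ) * Real.exp (-a * N ω) ∂μ := by
      gcongr
      exact integral_mul_exp_neg_mul_integral_le ha0 hint hrange
    _ = hoppingGain μ u N ((1 - Real.exp (-a)) * u) :=
      (hoppingGain_one_sub_exp_neg_mul hu.ne' hN a).symm
    _ ≤ _ := le_csSup (bddAbove_hoppingGain_image hint) (Set.mem_image_of_mem _ hmem)

theorem prop1_FD_lt_FH_general [IsProbabilityMeasure μ] {a c : ℝ} (ha : 2 ≤ a) (hc : 0 < c)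
    (hu : 0 < u) (hint : Integrable (fun ω => (N ω : ℝ)) μ) (hN : ∀ᵐ ω ∂μ, 1 ≤ N ω)
    (hE : ∫ ω, (N ω : ℝ) ∂μ < (1 / a) * Real.log ((Real.exp a - 1) * c)) :
    (∫ ω, (N ω : ℝ) ∂μ) * u / (2 * c) <
      (1 / 2) * sSup (hoppingGain μ u N '' Set.Icc 0 u) := by
  have hmean : 1 ≤ ∫ ω, (N ω : ℝ) ∂μ := by
    simpa using integral_mono_ae (integrable_const (1 : ℝ)) hint
      (hN.mono fun ω hω => Nat.one_le_cast.2 hω)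
  have hsup := le_sSup_hoppingGain hu hint hN ha
  have hinv := (lt_one_div_mul_log_exp_sub_one_mul_iff (two_pos.trans_le ha) hc).1 hE
  set m := ∫ ω, (N ω : ℝ) ∂μ
  calc
    m * u / (2 * c) = 1 / 2 * (u * m * (1 / c)) := by field_simp
    _ < 1 / 2 * (u * m * ((Real.exp a - 1) * Real.exp (-a * m))) := by gcongr
    _ = 1 / 2 * (u * (Real.exp a - 1) * (m * Real.exp (-a * m))) := by ring
    _ ≤ _ := by gcongr

end

/-- **Proposition 1.**  Let `N` be the random number of active users, with `1 ≤ N ≤ n_max`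
almost surely.  If `E[N] < (1/2) ln((e² - 1) n_max)`, then the average sum multiplexing gain
`E[N]·u/(2 n_max)` of frequency division is strictly smaller than that of robust frequency
hopping, `(1/2) sup_{v ∈ [0,u]} v · E[N (1 - v/u)^(N-1)]`. -/
theorem prop1_FD_lt_FH
    {Ω : Type*} [MeasurableSpace Ω] (P : Measure Ω) [IsProbabilityMeasure P]
    (nmax : ℕ) (hnmax : 2 ≤ nmax) (u : ℝ) (hu : 0 < u)
    (N : Ω → ℕ) (hNmeas : Measurable N)
    (hNbound : ∀ᵐ ω ∂P, 1 ≤ N ω ∧ N ω ≤ nmax)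
    (hE : ∫ ω, (N ω : ℝ) ∂P < (1 / 2) * Real.log ((Real.exp 2 - 1) * nmax)) :
    (∫ ω, (N ω : ℝ) ∂P) * u / (2 * nmax) <
      (1 / 2) * sSup ((fun v : ℝ =>
        v * ∫ ω, (N ω : ℝ) * (1 - v / u) ^ (N ω - 1) ∂P) '' Set.Icc 0 u) := by
  have hint := integrable_natCast_of_ae_le hNmeas.aemeasurable (hNbound.mono fun _ h => h.2)
  exact prop1_FD_lt_FH_general le_rfl (by positivity) hu hint (hNbound.mono fun _ h => h.1) hE
end

section
/- Let ω be a real number with 0 < ω ≤ e^{−2}. Then the function x ↦ x · ω^{x−1} is convex on the interval [1, ∞). -/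
/-!
With `c = log w`, the function `x * w ^ (x - 1)` is the positive multiple
`w⁻¹ * (x * exp (c * x))` of `x * exp (c * x)`, whose second derivative is
`c ^ 2 * (x + 2 / c) * exp (c * x)`. So, whatever the sign of `c`, convexity starts at the
inflection point `-2 / c`, and `-2 / c ≤ 1` as soon as `c ≤ -2`.
-/

open Real Set

theorem hasDerivAt_add_mul_mul_exp (a b c x : ℝ) :
    HasDerivAt (fun y => (a + b * y) * exp (c * y)) ((b + c * (a + b * x)) * exp (c * x)) x := by
  have h_affine : HasDerivAt (fun y => a + b * y) b x := (hasDerivAt_const_mul b).const_add a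
  have h_exp : HasDerivAt (fun y => exp (c * y)) (exp (c * x) * c) x :=
    (hasDerivAt_const_mul c).exp
  exact (h_affine.mul h_exp).congr_deriv (by ring)

theorem convexOn_mul_exp_const_mul {c : ℝ} (hc : c ≠ 0) :
    ConvexOn ℝ (Ici (-2 / c)) (fun x => x * exp (c * x)) := by
  have h_deriv (x : ℝ) :
      HasDerivAt (fun y => y * exp (c * y)) ((1 + c * x) * exp (c * x)) x := by
    simpa only [zero_add, one_mul] using hasDerivAt_add_mul_mul_exp 0 1 c x
  refine convexOn_of_hasDerivWithinAt2_nonneg (convex_Ici _)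
    (fun x _ => (h_deriv x).continuousAt.continuousWithinAt)
    (fun x _ => (h_deriv x).hasDerivWithinAt)
    (fun x _ => (hasDerivAt_add_mul_mul_exp 1 c c x).hasDerivWithinAt) fun x hx => ?_
  have hx : -2 / c ≤ x := interior_subset hx
  have h_factor : c + c * (1 + c * x) = c ^ 2 * (x - -2 / c) := by
    field_simp
    ring
  rw [h_factor]
  exact mul_nonneg (mul_nonneg (sq_nonneg c) (sub_nonneg.2 hx)) (exp_pos _).le

theorem convexOn_mul_rpow_of_le_exp_neg_two_general {w : ℝ} (hw0 : 0 < w) (hw1 : w ≠ 1) :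
    ConvexOn ℝ (Ici (-2 / log w)) (fun x => x * w ^ (x - 1)) := by
  have h_rescale (x : ℝ) : w⁻¹ * (x * exp (log w * x)) = x * w ^ (x - 1) := by
    rw [rpow_sub_one hw0.ne', rpow_def_of_pos hw0]
    ring
  simpa only [smul_eq_mul, h_rescale] using
    (convexOn_mul_exp_const_mul (log_ne_zero_of_pos_of_ne_one hw0 hw1)).smul (inv_pos.2 hw0).le

/-- **Appendix B convexity fact.**  For `0 < ω ≤ e⁻²`, the function `x ↦ x * ω^(x-1)`
(real exponent) is convex on `[1, ∞)`. -/
theorem convexOn_mul_rpow_of_le_exp_neg_two (w : ℝ) (hw0 : 0 < w)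
    (hw : w ≤ Real.exp (-2)) :
    ConvexOn ℝ (Set.Ici (1 : ℝ)) (fun x : ℝ => x * w ^ (x - 1)) := by
  have hlog : log w ≤ -2 := (log_le_iff_le_exp hw0).2 hw
  have hw1 : w < 1 := hw.trans_lt (exp_lt_one_iff.2 (by norm_num))
  exact (convexOn_mul_rpow_of_le_exp_neg_two_general hw0 hw1.ne).subset
    (Ici_subset_Ici.2 ((div_le_one_of_neg (log_neg hw0 hw1)).2 hlog)) (convex_Ici 1)
end

section
/- Let (Ω, F, P) be a probability space and N : Ω → ℕ a random variable with P(N ≥ 1) = 1 and E[N] < ∞, and let ω be a real number with 0 < ω ≤ e^{−2}. Then E[ N · ω^{N−1} ] ≥ E[N] · ω^{E[N]−1}. -/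
open MeasureTheory

/-!
The second derivative of `x ↦ x w^(x - c)` is `log w (2 + x log w) w^(x - c)`, which changes sign
only at `x = -2 / log w`. To the right of this point the function is convex and Jensen's inequality
applies; the bound `w ≤ e⁻²` says that this point is at most `1`.
-/

lemma hasDerivAt_affine_mul_rpow_sub {w : ℝ} (hw : 0 < w) (a b c x : ℝ) :
    HasDerivAt (fun x : ℝ => (a + x * b) * w ^ (x - c))
      ((b + (a + x * b) * Real.log w) * w ^ (x - c)) x := by
  have hpow : HasDerivAt (fun x : ℝ => w ^ (x - c)) (Real.log w * w ^ (x - c)) x := by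
    simpa using ((hasDerivAt_id x).sub_const c).const_rpow hw
  refine ((((hasDerivAt_id' x).mul_const b).const_add a).mul hpow).congr_deriv ?_
  ring

lemma convexOn_mul_rpow_sub {w : ℝ} (hw0 : 0 < w) (hw1 : w ≠ 1) (c : ℝ) :
    ConvexOn ℝ (Set.Ici (-2 / Real.log w)) (fun x : ℝ => x * w ^ (x - c)) := by
  have hderiv (x : ℝ) : HasDerivAt (fun x : ℝ => x * w ^ (x - c))
      ((1 + x * Real.log w) * w ^ (x - c)) x := by
    simpa using hasDerivAt_affine_mul_rpow_sub hw0 0 1 c x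
  refine convexOn_of_hasDerivWithinAt2_nonneg (convex_Ici _)
    (fun x _ => (hderiv x).continuousAt.continuousWithinAt)
    (fun x _ => (hderiv x).hasDerivWithinAt)
    (fun x _ => (hasDerivAt_affine_mul_rpow_sub hw0 1 (Real.log w) c x).hasDerivWithinAt)
    fun x hx => mul_nonneg ?_ (Real.rpow_nonneg hw0.le _)
  have hx' : -2 / Real.log w ≤ x := interior_subset hx
  have hlog : Real.log w ≠ 0 := Real.log_ne_zero_of_pos_of_ne_one hw0 hw1
  calc 0 ≤ Real.log w ^ 2 * (x - -2 / Real.log w) :=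
        mul_nonneg (sq_nonneg _) (sub_nonneg.2 hx')
    _ = Real.log w + (1 + x * Real.log w) * Real.log w := by field_simp; ring

lemma integrable_mul_rpow_sub {Ω : Type*} [MeasurableSpace Ω] {μ : Measure Ω} {X : Ω → ℝ}
    (hX : Integrable X μ) {a : ℝ} (haX : ∀ᵐ ω ∂μ, a ≤ X ω) {w : ℝ} (hw0 : 0 < w) (hw1 : w ≤ 1)
    (c : ℝ) : Integrable (fun ω => X ω * w ^ (X ω - c)) μ := by
  have hcont : Continuous fun x : ℝ => w ^ (x - c) :=
    (Real.continuous_const_rpow hw0.ne').comp (continuous_sub_right c)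
  refine hX.mul_bdd (c := w ^ (a - c))
    (hcont.comp_aestronglyMeasurable hX.aestronglyMeasurable) ?_
  filter_upwards [haX] with ω hω
  rw [Real.norm_of_nonneg (Real.rpow_nonneg hw0.le _)]
  exact Real.rpow_le_rpow_of_exponent_ge hw0 hw1 (sub_le_sub_right hω c)

theorem jensen_mul_rpow_general {Ω : Type*} [MeasurableSpace Ω] (P : Measure Ω)
    [IsProbabilityMeasure P] {X : Ω → ℝ} (hX : Integrable X P) {w : ℝ} (hw0 : 0 < w) (hw1 : w < 1)
    (hwX : ∀ᵐ ω ∂P, -2 / Real.log w ≤ X ω) (c : ℝ) :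
    (∫ ω, X ω ∂P) * w ^ ((∫ ω, X ω ∂P) - c) ≤ ∫ ω, X ω * w ^ (X ω - c) ∂P := by
  have hconv := convexOn_mul_rpow_sub hw0 hw1.ne c
  have hcont : Continuous fun x : ℝ => x * w ^ (x - c) :=
    continuous_id.mul ((Real.continuous_const_rpow hw0.ne').comp (continuous_sub_right c))
  exact hconv.map_integral_le hcont.continuousOn isClosed_Ici hwX hX
    (integrable_mul_rpow_sub hX hwX hw0 hw1.le c)

/-- **Jensen step (eq. (60)) of Appendix B.**  For a random number of users `N ≥ 1` a.s. with
finite mean, and `0 < ω ≤ e⁻²`, one has `E[N ω^(N-1)] ≥ E[N] ω^(E[N]-1)`. -/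
theorem jensen_mul_rpow
    {Ω : Type*} [MeasurableSpace Ω] (P : Measure Ω) [IsProbabilityMeasure P]
    (N : Ω → ℕ) (hNmeas : Measurable N) (hN1 : ∀ᵐ ω ∂P, 1 ≤ N ω)
    (hNint : Integrable (fun ω => (N ω : ℝ)) P)
    (w : ℝ) (hw0 : 0 < w) (hw : w ≤ Real.exp (-2)) :
    ∫ ω, (N ω : ℝ) * w ^ ((N ω : ℝ) - 1) ∂P ≥
      (∫ ω, (N ω : ℝ) ∂P) * w ^ ((∫ ω, (N ω : ℝ) ∂P) - 1) := by
  have hw1 : w < 1 := hw.trans_lt (Real.exp_lt_one_iff.2 (by norm_num))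
  have hthreshold : -2 / Real.log w ≤ 1 :=
    (div_le_one_of_neg (Real.log_neg hw0 hw1)).2 ((Real.log_le_iff_le_exp hw0).2 hw)
  exact jensen_mul_rpow_general P hNint hw0 hw1
    (hN1.mono fun _ h => hthreshold.trans (Nat.one_le_cast.2 h)) 1
end

section
/- The function g(x) = (1/x) · (1 − 1/x)^{x−1} is strictly decreasing on the interval (1, ∞). -/
/-!
For `1 < x` we have `(1/x) (1 - 1/x)^(x-1) = (x-1)^(x-1) / x^x = exp (-(φ x - φ (x-1)))` with
`φ t = t log t`. Since `φ` is strictly convex, its increments over a fixed step strictly increase.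
-/

open Real Set

theorem strictMonoOn_map_sub_map_sub_of_strictConvexOn {𝕜 : Type*} [Field 𝕜] [LinearOrder 𝕜]
    [IsStrictOrderedRing 𝕜] {s : Set 𝕜} {f : 𝕜 → 𝕜} (hf : StrictConvexOn 𝕜 s f) {a : 𝕜}
    (ha : 0 < a) : StrictMonoOn (fun x ↦ f x - f (x - a)) (s ∩ (· - a) ⁻¹' s) := by
  rintro x ⟨hx, hxa⟩ y ⟨hy, hya⟩ hxy
  have hxa_y : x - a < y := (sub_lt_self x ha).trans hxy
  have secant_lt : (f x - f (x - a)) / a < (f y - f (y - a)) / a :=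
    calc (f x - f (x - a)) / a = (f x - f (x - a)) / (x - (x - a)) := by rw [sub_sub_cancel]
      _ < (f y - f (x - a)) / (y - (x - a)) :=
        hf.secant_strict_mono hxa hx hy (sub_lt_self x ha).ne' hxa_y.ne' hxy
      _ = (f (x - a) - f y) / (x - a - y) := by rw [← neg_div_neg_eq, neg_sub, neg_sub]
      _ < (f (y - a) - f y) / (y - a - y) :=
        hf.secant_strict_mono hy hxa hya hxa_y.ne (sub_lt_self y ha).ne (sub_lt_sub_right hxy a)
      _ = (f y - f (y - a)) / a := by rw [← neg_div_neg_eq, neg_sub, neg_sub, sub_sub_cancel]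
  exact (div_lt_div_iff_of_pos_right ha).1 secant_lt

theorem rpow_self_eq_exp_mul_log {x : ℝ} (hx : 0 ≤ x) : x ^ x = exp (x * log x) := by
  obtain rfl | hx := hx.eq_or_lt
  · -- Both sides are `1`, since `0 ^ 0 = 1` and `log 0 = 0` by convention.
    simp
  · rw [rpow_def_of_pos hx, mul_comm]

theorem strictAntiOn_sub_rpow_sub_div_rpow_self {a : ℝ} (ha : 0 < a) :
    StrictAntiOn (fun x : ℝ ↦ (x - a) ^ (x - a) / x ^ x) (Ici a) := by
  have eq_exp : EqOn (fun x ↦ exp (-(x * log x - (x - a) * log (x - a))))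
      (fun x ↦ (x - a) ^ (x - a) / x ^ x) (Ici a) := fun x hx ↦ by
    simp only [rpow_self_eq_exp_mul_log (sub_nonneg.2 hx),
      rpow_self_eq_exp_mul_log (ha.le.trans hx), neg_sub, exp_sub]
  have increments_strictMonoOn : StrictMonoOn (fun x ↦ x * log x - (x - a) * log (x - a)) (Ici a) :=
    (strictMonoOn_map_sub_map_sub_of_strictConvexOn strictConvexOn_mul_log ha).mono
      fun x hx ↦ ⟨ha.le.trans hx, (sub_nonneg.2 hx : 0 ≤ x - a)⟩
  exact (exp_strictMono.comp_strictAntiOn increments_strictMonoOn.neg).congr eq_exp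

theorem rpow_neg_mul_one_sub_div_rpow_sub {a x : ℝ} (hx : 0 < x) (hax : a ≤ x) :
    x ^ (-a) * (1 - a / x) ^ (x - a) = (x - a) ^ (x - a) / x ^ x :=
  calc x ^ (-a) * (1 - a / x) ^ (x - a)
      = x ^ (-a) * ((x - a) ^ (x - a) / x ^ (x - a)) := by
        rw [one_sub_div hx.ne', div_rpow (sub_nonneg.2 hax) hx.le]
    _ = (x - a) ^ (x - a) / (x ^ a * x ^ (x - a)) := by
        rw [rpow_neg hx.le, inv_mul_eq_div, div_div, mul_comm (x ^ (x - a))]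
    _ = (x - a) ^ (x - a) / x ^ x := by rw [← rpow_add hx, add_sub_cancel]

/-- The function `g(x) = (1/x) (1 - 1/x)^(x-1)` (real exponent) is strictly decreasing
on `(1, ∞)`. -/
theorem strictAntiOn_inv_mul_one_sub_inv_rpow :
    StrictAntiOn (fun x : ℝ => (1 / x) * (1 - 1 / x) ^ (x - 1)) (Set.Ioi (1 : ℝ)) := by
  refine ((strictAntiOn_sub_rpow_sub_div_rpow_self one_pos).mono Ioi_subset_Ici_self).congr
    fun x (hx : 1 < x) ↦ (rpow_neg_mul_one_sub_div_rpow_sub (one_pos.trans hx) hx.le).symm.trans ?_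
  rw [rpow_neg_one, one_div]
end

section
/- Let (Ω, F, P) be a probability space, u > 0 a real, and N : Ω → ℕ a random variable with P(N ≥ 1) = 1 and m = E[N] < ∞ (so m ≥ 1). Then sup_{v ∈ [0,u]} ( v · E[ (1 − v/u)^{N−1} ] ) ≥ (u/m) · (1 − 1/m)^{m−1} (with the convention 0⁰ = 1 when m = 1 or v = u). -/
open MeasureTheory

section RpowMoment

variable {Ω : Type*} [MeasurableSpace Ω] {P : Measure Ω} {X Y : Ω → ℝ} {q u v : ℝ}

lemma ae_norm_const_rpow_le_one (hY0 : 0 ≤ᵐ[P] Y) (hq0 : 0 ≤ q) (hq1 : q ≤ 1) :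
    ∀ᵐ ω ∂P, ‖q ^ Y ω‖ ≤ 1 := by
  filter_upwards [hY0] with ω hω
  rw [Real.norm_of_nonneg (Real.rpow_nonneg hq0 _)]
  exact Real.rpow_le_one hq0 hq1 hω

lemma integrable_const_rpow [IsFiniteMeasure P] (hY : AEMeasurable Y P) (hY0 : 0 ≤ᵐ[P] Y)
    (hq0 : 0 ≤ q) (hq1 : q ≤ 1) : Integrable (fun ω => q ^ Y ω) P :=
  .of_bound (hY.const_pow q).aestronglyMeasurable 1 (ae_norm_const_rpow_le_one hY0 hq0 hq1)

lemma integral_const_rpow_le_one [IsProbabilityMeasure P] (hY0 : 0 ≤ᵐ[P] Y)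
    (hq0 : 0 ≤ q) (hq1 : q ≤ 1) : ∫ ω, q ^ Y ω ∂P ≤ 1 := by
  simpa using (Real.le_norm_self _).trans
    (norm_integral_le_of_norm_le_const (ae_norm_const_rpow_le_one hY0 hq0 hq1))

lemma rpow_integral_le_integral_rpow_of_pos [IsProbabilityMeasure P] (hY : Integrable Y P)
    (hqY : Integrable (fun ω => q ^ Y ω) P) (hq : 0 < q) :
    q ^ (∫ ω, Y ω ∂P) ≤ ∫ ω, q ^ Y ω ∂P :=
  (convexOn_rpow_left hq).map_integral_le (Real.continuous_const_rpow hq.ne').continuousOn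
    isClosed_univ (.of_forall fun _ => Set.mem_univ _) hY hqY

-- Separate from the case `0 < q`, since `x ↦ 0 ^ x` is discontinuous at `0` (`0 ^ 0 = 1`).
lemma zero_rpow_integral_le_integral_zero_rpow [IsProbabilityMeasure P] (hY : Integrable Y P)
    (hY0 : 0 ≤ᵐ[P] Y) : (0 : ℝ) ^ (∫ ω, Y ω ∂P) ≤ ∫ ω, (0 : ℝ) ^ Y ω ∂P := by
  by_cases hmean : ∫ ω, Y ω ∂P = 0
  · have hYzero : Y =ᵐ[P] 0 := (integral_eq_zero_iff_of_nonneg_ae hY0 hY).1 hmean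
    have hpow : (fun ω => (0 : ℝ) ^ Y ω) =ᵐ[P] fun _ => 1 := by
      filter_upwards [hYzero] with ω hω
      rw [hω, Pi.zero_apply, Real.rpow_zero]
    rw [hmean, integral_congr_ae hpow]
    simp
  · rw [Real.zero_rpow hmean]
    exact integral_nonneg fun ω => Real.rpow_nonneg le_rfl _

lemma rpow_integral_le_integral_rpow [IsProbabilityMeasure P] (hY : Integrable Y P)
    (hY0 : 0 ≤ᵐ[P] Y) (hq0 : 0 ≤ q) (hq1 : q ≤ 1) :
    q ^ (∫ ω, Y ω ∂P) ≤ ∫ ω, q ^ Y ω ∂P := by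
  rcases hq0.eq_or_lt with rfl | hq
  · exact zero_rpow_integral_le_integral_zero_rpow hY hY0
  · exact rpow_integral_le_integral_rpow_of_pos hY
      (integrable_const_rpow hY.aemeasurable hY0 hq0 hq1) hq

lemma one_sub_div_mem_Icc (hv : v ∈ Set.Icc 0 u) : 1 - v / u ∈ Set.Icc (0 : ℝ) 1 :=
  Set.Icc.mem_iff_one_sub_mem.1 (unitInterval.div_mem hv.1 (hv.1.trans hv.2) hv.2)

lemma bddAbove_mul_integral_rpow [IsProbabilityMeasure P] (hY0 : 0 ≤ᵐ[P] Y) :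
    BddAbove ((fun v : ℝ => v * ∫ ω, (1 - v / u) ^ Y ω ∂P) '' Set.Icc 0 u) := by
  refine ⟨u, ?_⟩
  rintro _ ⟨v, hv, rfl⟩
  obtain ⟨hq0, hq1⟩ := one_sub_div_mem_Icc hv
  exact (mul_le_of_le_one_right hv.1 (integral_const_rpow_le_one hY0 hq0 hq1)).trans hv.2

lemma mul_rpow_integral_le_sSup [IsProbabilityMeasure P] (hY : Integrable Y P)
    (hY0 : 0 ≤ᵐ[P] Y) (hv : v ∈ Set.Icc 0 u) :
    v * (1 - v / u) ^ (∫ ω, Y ω ∂P) ≤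
      sSup ((fun v : ℝ => v * ∫ ω, (1 - v / u) ^ Y ω ∂P) '' Set.Icc 0 u) := by
  obtain ⟨hq0, hq1⟩ := one_sub_div_mem_Icc hv
  exact le_csSup_of_le (bddAbove_mul_integral_rpow hY0) (Set.mem_image_of_mem _ hv)
    (mul_le_mul_of_nonneg_left (rpow_integral_le_integral_rpow hY hY0 hq0 hq1) hv.1)

lemma integral_pow_sub_one_eq_integral_rpow {N : Ω → ℕ} (hN1 : ∀ᵐ ω ∂P, 1 ≤ N ω) (q : ℝ) :
    ∫ ω, q ^ (N ω - 1) ∂P = ∫ ω, q ^ ((N ω : ℝ) - 1) ∂P := by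
  refine integral_congr_ae ?_
  filter_upwards [hN1] with ω hω
  rw [← Real.rpow_natCast, Nat.cast_sub hω, Nat.cast_one]

theorem sup_v_mul_expectation_ge_general [IsProbabilityMeasure P] (hu : 0 < u)
    (hX1 : ∀ᵐ ω ∂P, 1 ≤ X ω) (hX : Integrable X P) {m : ℝ} (hm : m = ∫ ω, X ω ∂P) :
    sSup ((fun v : ℝ => v * ∫ ω, (1 - v / u) ^ (X ω - 1) ∂P) '' Set.Icc 0 u) ≥
      (u / m) * (1 - 1 / m) ^ (m - 1) := by
  have hY : Integrable (fun ω => X ω - 1) P := hX.sub (integrable_const 1)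
  have hY0 : 0 ≤ᵐ[P] fun ω => X ω - 1 := hX1.mono fun ω => sub_nonneg.2
  have hmean : ∫ ω, (X ω - 1) ∂P = m - 1 := by
    simp [integral_sub hX (integrable_const 1), hm]
  have hm1 : 1 ≤ m := sub_nonneg.1 (hmean ▸ integral_nonneg_of_ae hY0)
  -- `u / m` maximises `v * (1 - v / u) ^ (m - 1)` over `v ∈ [0, u]`.
  have hv : u / m ∈ Set.Icc 0 u := ⟨by positivity, div_le_self hu.le hm1⟩
  have hquot : u / m / u = 1 / m := by field_simp
  simpa only [hmean, hquot] using mul_rpow_integral_le_sSup hY hY0 hv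

end RpowMoment

/-- **Inequality (69) of Appendix C.**  With `N ≥ 1` a.s. of finite mean `m = E[N]`,
`sup_{v ∈ [0,u]} v · E[(1 - v/u)^(N-1)] ≥ (u/m) (1 - 1/m)^(m-1)` (real exponent `m - 1`,
with the convention `0^0 = 1`). -/
theorem sup_v_mul_expectation_ge
    {Ω : Type*} [MeasurableSpace Ω] (P : Measure Ω) [IsProbabilityMeasure P]
    (u : ℝ) (hu : 0 < u)
    (N : Ω → ℕ) (hNmeas : Measurable N) (hN1 : ∀ᵐ ω ∂P, 1 ≤ N ω)
    (hNint : Integrable (fun ω => (N ω : ℝ)) P)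
    (m : ℝ) (hm : m = ∫ ω, (N ω : ℝ) ∂P) :
    sSup ((fun v : ℝ => v * ∫ ω, (1 - v / u) ^ (N ω - 1) ∂P) '' Set.Icc 0 u) ≥
      (u / m) * (1 - 1 / m) ^ (m - 1) := by
  simpa only [integral_pow_sub_one_eq_integral_rpow hN1] using
    sup_v_mul_expectation_ge_general hu (hN1.mono fun _ => Nat.one_le_cast.2) hNint hm
end

section
/- Let u > 0 and let q_1, q_2 be nonnegative reals with q_1 + q_2 = 1. Then sup_{v ∈ [0,u]} ( (1/2) q_1 v + q_2 · v · (1 − v/u) ) > (q_1 + 2 q_2) · u / 4 if and only if q_1 > 2/3. Moreover, if q_2 > 0 and q_1 ≤ 2 q_2 the supremum equals (q_1 + 2q_2)² u / (16 q_2), while if q_1 > 2 q_2 the supremum equals q_1 u / 2. -/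
/-! The mean FH gain is a quadratic in the hopping bandwidth `v`. For `q₂ > 0` its vertex
`(q₁ + 2 q₂) u / (4 q₂)` lies in `[0, u]` exactly when `|q₁| ≤ 2 q₂`, and completing the square
gives the maximum. For `0 ≤ q₁` and `2 q₂ ≤ q₁` the full band `v = u` is optimal instead. In these
two regimes the maximum exceeds the FD gain by `(q₁ + 2 q₂) (q₁ - 2 q₂) u / (16 q₂)` and
`(q₁ - 2 q₂) u / 4` respectively, so the sign of `q₁ - 2 q₂` decides the comparison. -/

section Gains

variable {K : Type*} [Field K] {u q₁ q₂ : K}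

/-- The mean sum multiplexing gain `E{SMG_FH(v, N)}` of robust frequency hopping, as a function of
the hopping bandwidth `v` out of the total bandwidth `u`, with `qₙ` the weight of `n` active users.
The weights are arbitrary scalars rather than probabilities. -/
def fhGain (u q₁ q₂ v : K) : K :=
  (1 / 2) * q₁ * v + q₂ * v * (1 - v / u)

/-- The mean sum multiplexing gain `η_FD^{(1)}` of frequency division designed for two users, the
benchmark for `fhGain`. -/
def fdGain (u q₁ q₂ : K) : K :=
  (q₁ + 2 * q₂) * u / 4

lemma fhGain_eq_sub_sq [CharZero K] (hu : u ≠ 0) (hq₂ : q₂ ≠ 0) (v : K) :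
    fhGain u q₁ q₂ v = (q₁ + 2 * q₂) ^ 2 * u / (16 * q₂)
      - q₂ / u * (v - (q₁ + 2 * q₂) * u / (4 * q₂)) ^ 2 := by
  unfold fhGain
  field_simp
  ring

lemma fhGain_self (hu : u ≠ 0) : fhGain u q₁ q₂ u = q₁ * u / 2 := by
  rw [fhGain, div_self hu]
  ring

lemma fhGain_self_sub_fhGain [CharZero K] (hu : u ≠ 0) (v : K) :
    fhGain u q₁ q₂ u - fhGain u q₁ q₂ v = (u - v) * (q₁ * u - 2 * q₂ * v) / (2 * u) := by
  unfold fhGain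
  field_simp
  ring

variable [LinearOrder K] [IsStrictOrderedRing K]

lemma fhGain_vertex_mem_Icc (hu : 0 ≤ u) (hq₂ : 0 < q₂) (hq : |q₁| ≤ 2 * q₂) :
    (q₁ + 2 * q₂) * u / (4 * q₂) ∈ Set.Icc 0 u := by
  obtain ⟨hlow, hupp⟩ := abs_le.1 hq
  have hnonneg : 0 ≤ q₁ + 2 * q₂ := by linarith
  refine ⟨by positivity, (div_le_iff₀ (by positivity)).2 ?_⟩
  calc (q₁ + 2 * q₂) * u ≤ (4 * q₂) * u := by gcongr; linarith
    _ = u * (4 * q₂) := mul_comm _ _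

theorem isGreatest_fhGain_of_abs_le (hu : 0 < u) (hq₂ : 0 < q₂) (hq : |q₁| ≤ 2 * q₂) :
    IsGreatest (fhGain u q₁ q₂ '' Set.Icc 0 u) ((q₁ + 2 * q₂) ^ 2 * u / (16 * q₂)) := by
  refine ⟨⟨_, fhGain_vertex_mem_Icc hu.le hq₂ hq, ?_⟩, ?_⟩
  · simp [fhGain_eq_sub_sq hu.ne' hq₂.ne']
  · rintro _ ⟨v, -, rfl⟩
    rw [fhGain_eq_sub_sq hu.ne' hq₂.ne']
    exact sub_le_self _ (by positivity)

theorem isGreatest_fhGain_of_two_mul_le (hu : 0 < u) (hq₁ : 0 ≤ q₁) (hq : 2 * q₂ ≤ q₁) :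
    IsGreatest (fhGain u q₁ q₂ '' Set.Icc 0 u) (q₁ * u / 2) := by
  rw [← fhGain_self hu.ne']
  refine ⟨Set.mem_image_of_mem _ (Set.right_mem_Icc.2 hu.le), ?_⟩
  rintro _ ⟨v, ⟨hv, hvu⟩, rfl⟩
  have hslope : 2 * q₂ * v ≤ q₁ * u :=
    calc 2 * q₂ * v ≤ q₁ * v := by gcongr
      _ ≤ q₁ * u := by gcongr
  rw [← sub_nonneg, fhGain_self_sub_fhGain hu.ne']
  exact div_nonneg (mul_nonneg (sub_nonneg.2 hvu) (sub_nonneg.2 hslope)) (by positivity)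

lemma fdGain_lt_mul_div_two_iff (hu : 0 < u) : fdGain u q₁ q₂ < q₁ * u / 2 ↔ 2 * q₂ < q₁ := by
  have hsub : q₁ * u / 2 - fdGain u q₁ q₂ = (q₁ - 2 * q₂) * (u / 4) := by
    unfold fdGain
    ring
  rw [← sub_pos, hsub, mul_pos_iff_of_pos_right (by positivity), sub_pos]

lemma sq_mul_div_le_fdGain (hu : 0 ≤ u) (hq₂ : 0 < q₂) (hq : |q₁| ≤ 2 * q₂) :
    (q₁ + 2 * q₂) ^ 2 * u / (16 * q₂) ≤ fdGain u q₁ q₂ := by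
  obtain ⟨hlow, hupp⟩ := abs_le.1 hq
  have hsub : fdGain u q₁ q₂ - (q₁ + 2 * q₂) ^ 2 * u / (16 * q₂)
      = (q₁ + 2 * q₂) * (2 * q₂ - q₁) * u / (16 * q₂) := by
    unfold fdGain
    field_simp
    ring
  have hadd : 0 ≤ q₁ + 2 * q₂ := by linarith
  rw [← sub_nonneg, hsub]
  exact div_nonneg (mul_nonneg (mul_nonneg hadd (sub_nonneg.2 hupp)) hu) (by positivity)

end Gains

theorem fdGain_lt_sSup_fhGain_iff {u q₁ q₂ : ℝ} (hu : 0 < u) (hq₁ : 0 ≤ q₁) :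
    fdGain u q₁ q₂ < sSup (fhGain u q₁ q₂ '' Set.Icc 0 u) ↔ 2 * q₂ < q₁ := by
  rcases le_or_gt (2 * q₂) q₁ with hge | hlt
  · rw [(isGreatest_fhGain_of_two_mul_le hu hq₁ hge).csSup_eq, fdGain_lt_mul_div_two_iff hu]
  · have hq₂ : 0 < q₂ := by linarith
    have hq : |q₁| ≤ 2 * q₂ := (abs_of_nonneg hq₁).trans_le hlt.le
    rw [(isGreatest_fhGain_of_abs_le hu hq₂ hq).csSup_eq]
    exact iff_of_false (sq_mul_div_le_fdGain hu.le hq₂ hq).not_gt hlt.not_gt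

theorem example1_eta1_general {u q₁ q₂ : ℝ} (hu : 0 < u) (hq₁ : 0 ≤ q₁) :
    (sSup (fhGain u q₁ q₂ '' Set.Icc 0 u) > fdGain u q₁ q₂ ↔ q₁ > 2 * q₂) ∧
    (0 < q₂ → q₁ ≤ 2 * q₂ →
      sSup (fhGain u q₁ q₂ '' Set.Icc 0 u) = (q₁ + 2 * q₂) ^ 2 * u / (16 * q₂)) ∧
    (q₁ > 2 * q₂ → sSup (fhGain u q₁ q₂ '' Set.Icc 0 u) = q₁ * u / 2) :=
  ⟨fdGain_lt_sSup_fhGain_iff hu hq₁,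
    fun hq₂ hle => (isGreatest_fhGain_of_abs_le hu hq₂
      ((abs_of_nonneg hq₁).trans_le hle)).csSup_eq,
    fun hgt => (isGreatest_fhGain_of_two_mul_le hu hq₁ hgt.le).csSup_eq⟩

/-- **Example 1.**  With `n_max = 2`, `q₁ + q₂ = 1`, the robust-FH average sum multiplexing
gain `sup_{v ∈ [0,u]} ((1/2) q₁ v + q₂ v (1 - v/u))` exceeds the FD value `(q₁ + 2q₂)u/4`
iff `q₁ > 2/3`; moreover the supremum equals `(q₁ + 2q₂)² u / (16 q₂)` when `q₂ > 0` and
`q₁ ≤ 2q₂`, and equals `q₁ u / 2` when `q₁ > 2q₂`. -/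
theorem example1_eta1 (u q1 q2 : ℝ) (hu : 0 < u) (hq1 : 0 ≤ q1) (hq2 : 0 ≤ q2)
    (hsum : q1 + q2 = 1) :
    (sSup ((fun v : ℝ => (1 / 2) * q1 * v + q2 * v * (1 - v / u)) '' Set.Icc 0 u) >
        (q1 + 2 * q2) * u / 4 ↔ q1 > 2 / 3) ∧
    (0 < q2 → q1 ≤ 2 * q2 →
      sSup ((fun v : ℝ => (1 / 2) * q1 * v + q2 * v * (1 - v / u)) '' Set.Icc 0 u)
        = (q1 + 2 * q2) ^ 2 * u / (16 * q2)) ∧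
    (q1 > 2 * q2 →
      sSup ((fun v : ℝ => (1 / 2) * q1 * v + q2 * v * (1 - v / u)) '' Set.Icc 0 u)
        = q1 * u / 2) := by
  have hthreshold : q1 > 2 * q2 ↔ q1 > 2 / 3 := by constructor <;> intro h <;> linarith
  rw [← hthreshold]
  exact example1_eta1_general hu hq1
end
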